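/- Let (R,m) be a Noetherian local ring of dimension d≥1, I_1,…,I_s m-primary ideals of R, and F = {F(n)}_{n∈ℤ^s} an I-admissible filtration of ideals in R. Then: (1) e_α(F) = e_α({I^n}) for all α∈ℕ^s with |α| = d; (2) Δ^d(P_F(n)) = Δ^d(P_{{I^n}}(n)) = e_0(I_1⋯I_s) for all n∈ℤ^s; (3) if J ⊆ F(e) is an ideal such that JF(n) = F(n+e) for all sufficiently large n∈ℕ^s (such a J is m-primary), then Δ^d(P_F(n)) = e_0(J) = e_0(I_1⋯I_s). -/

import Mathlib

/-! Common definitions for multigraded filtrations of ideals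
(following Sarkar–Verma, "Postulation and reduction vectors of
multigraded filtrations of ideals"). -/

open Finset IsLocalRing

/-- The vector `e = (1,…,1) ∈ ℤˢ`. -/
def evec (s : ℕ) : Fin s → ℤ := fun _ => 1

/-- `n⁺`, the componentwise positive part of a vector. -/
def vplus {s : ℕ} (n : Fin s → ℤ) : Fin s → ℤ := fun i => max (n i) 0

/-- `I^n = I₁^{n₁} ⋯ I_s^{n_s}` with the convention `I_i^{n_i} = R` for `n_i ≤ 0`. -/
def prodPow {R : Type*} [CommRing R] {s : ℕ} (I : Fin s → Ideal R) (n : Fin s → ℤ) : Ideal R :=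
  ∏ i, I i ^ (n i).toNat

/-- An ideal is `m`-primary iff it is proper and contains a power of the maximal ideal. -/
def IsMPrimary (R : Type*) [CommRing R] [IsLocalRing R] (I : Ideal R) : Prop :=
  I ≠ ⊤ ∧ maximalIdeal R ≤ I.radical

/-- A Cohen–Macaulay local ring: some system of parameters (a regular sequence of
length equal to the Krull dimension inside the maximal ideal) exists. -/
def IsCMLocal (R : Type*) [CommRing R] [IsLocalRing R] : Prop :=
  ∃ rs : List R, (∀ x ∈ rs, x ∈ maximalIdeal R) ∧ RingTheory.Sequence.IsRegular R rs ∧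
    (rs.length : WithBot ℕ∞) = ringKrullDim R

/-- A `ℤˢ`-graded `I`-admissible filtration of ideals.  Admissibility (finiteness of the
extended Rees ring `R'(F)` as a module over `R'(I)`) is recorded through the equivalent
condition that `F(n + m) = I^n F(m)` for all `n ≥ 0`, for a suitable fixed `m ≥ 0`. -/
structure AdmissibleFiltration (R : Type*) [CommRing R] (s : ℕ) (I : Fin s → Ideal R) where
  F : (Fin s → ℤ) → Ideal R
  prodPow_le : ∀ n, prodPow I n ≤ F n
  mul_le : ∀ m n, F m * F n ≤ F (m + n)
  antitone : ∀ m n : Fin s → ℤ, m ≤ n → F n ≤ F m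
  plus_eq : ∀ n, F n = F (vplus n)
  admissible : ∃ m : Fin s → ℤ, 0 ≤ m ∧
    ∀ n : Fin s → ℤ, 0 ≤ n → F (n + m) = prodPow I n * F m

/-- The length `λ_R(M)` of a module, as an integer (the longest chain of submodules;
this is the usual length for modules of finite length). -/
noncomputable def lenI (R M : Type*) [CommRing R] [AddCommGroup M] [Module R M] : ℤ :=
  (((Order.krullDim (Submodule R M)).unbotD 0).toNat : ℤ)

/-- The Hilbert function `H_F(n) = λ(R/F(n))` of a filtration. -/
noncomputable def hilbFn {R : Type*} [CommRing R] {s : ℕ} {I : Fin s → Ideal R}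
    (F : AdmissibleFiltration R s I) (n : Fin s → ℤ) : ℤ :=
  lenI R (R ⧸ F.F n)

/-- The multigraded Hilbert polynomial with coefficient data `c = (e_α)`:
`P(n) = Σ_{|α| ≤ d} (−1)^{d−|α|} e_α ∏ᵢ binom(nᵢ+αᵢ−1, αᵢ)`. -/
noncomputable def hilbPoly (s d : ℕ) (c : (Fin s → ℕ) → ℤ) (n : Fin s → ℤ) : ℤ :=
  ∑ α ∈ Finset.univ.filter (fun α : Fin s → Fin (d+1) => (∑ i, (α i : ℕ)) ≤ d),
    (-1)^(d - ∑ i, (α i : ℕ)) * c (fun i => (α i : ℕ)) *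
      ∏ i, Ring.choose (n i + ((α i : ℕ) : ℤ) - 1) (α i : ℕ)

/-- `c : (Fin s → ℕ) → ℤ` is the family of Hilbert coefficients of `F`:
the corresponding polynomial agrees with the Hilbert function for all large `n`. -/
noncomputable def IsHilbCoeffs {R : Type*} [CommRing R] {s : ℕ} {I : Fin s → Ideal R}
    (F : AdmissibleFiltration R s I) (d : ℕ) (c : (Fin s → ℕ) → ℤ) : Prop :=
  ∃ N : ℕ, ∀ n : Fin s → ℤ, (∀ i, (N : ℤ) ≤ n i) → hilbPoly s d c n = hilbFn F n

/-- The Samuel polynomial `P_a(n) = Σ_{i=0}^{d} (−1)^i e_i binom(n+d−1−i, d−i)` with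
coefficient data `c = (e_i)`. -/
noncomputable def samuelPoly (d : ℕ) (c : ℕ → ℤ) (n : ℤ) : ℤ :=
  ∑ i ∈ Finset.range (d + 1), (-1)^i * c i * Ring.choose (n + (d : ℤ) - 1 - (i : ℤ)) (d - i)

/-- `c` is the family of Hilbert coefficients of the `m`-primary ideal `a`. -/
noncomputable def IsSamuelCoeffs {R : Type*} [CommRing R] (a : Ideal R) (d : ℕ)
    (c : ℕ → ℤ) : Prop :=
  ∃ N : ℕ, ∀ n : ℕ, N ≤ n → samuelPoly d c (n : ℤ) = lenI R (R ⧸ a ^ n)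

section Reductions

variable {R : Type*} [CommRing R] {s d : ℕ} {I : Fin s → Ideal R}

/-- The ideal `J = (y₁,…,y_d)` of a complete reduction datum, where `y_j = x_{1j}⋯x_{sj}`. -/
def crIdeal (x : Fin s → Fin d → R) : Ideal R :=
  Ideal.span (Set.range fun j => ∏ i, x i j)

/-- `A = {x_{ij} ∈ I_i}` is a complete reduction of `F`: `J·F(n) = F(n+e)` for all large `n`. -/
def IsCompleteReduction (F : AdmissibleFiltration R s I) (x : Fin s → Fin d → R) : Prop :=
  (∀ i j, x i j ∈ I i) ∧
  ∃ N : ℕ, ∀ n : Fin s → ℤ, (∀ i, (N : ℤ) ≤ n i) →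
    crIdeal x * F.F n = F.F (n + evec s)

/-- A good complete reduction: in addition `F(m) ∩ (y₁) = y₁ F(m−e)` for all large `m`. -/
def IsGoodCompleteReduction (F : AdmissibleFiltration R s I) (x : Fin s → Fin d → R) : Prop :=
  IsCompleteReduction F x ∧
  ∀ h : 0 < d, ∃ N : ℕ, ∀ m : Fin s → ℤ, (∀ i, (N : ℤ) ≤ m i) →
    F.F m ⊓ Ideal.span {∏ i, x i ⟨0, h⟩} =
      Ideal.span {∏ i, x i ⟨0, h⟩} * F.F (m - evec s)

end Reductions

/-- The first difference operator `Δ¹ f (n) = f(n+e) − f(n)`; `Δ^k` is its `k`-th iterate. -/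
def deltaOp {s : ℕ} (f : (Fin s → ℤ) → ℤ) : (Fin s → ℤ) → ℤ :=
  fun n => f (n + evec s) - f n

/-- The Ratliff–Rush closure filtration `F̆(n) = ⋃_{k ≥ 1} (F(n+ke) : F(e)^k)`. -/
def ratliffRush {R : Type*} [CommRing R] {s : ℕ} {I : Fin s → Ideal R}
    (F : AdmissibleFiltration R s I) (n : Fin s → ℤ) : Ideal R :=
  ⨆ k : ℕ, (F.F (n + ((k + 1) : ℕ) • evec s)).colon (F.F (evec s) ^ (k + 1) : Ideal R)

/-- Vanishing of `H¹_{R₊₊}(R(F))_n` for all `n ∈ ℕˢ`.  By Proposition 4.1 of the paper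
(see STATEMENT 9), the degree-`n` component of this local cohomology module is isomorphic
to `F̆(n)/F(n)`, so its vanishing for all `n ≥ 0` is the statement that the Ratliff–Rush
closure filtration agrees with `F` in all nonnegative degrees. -/
def H1ReesVanishes {R : Type*} [CommRing R] {s : ℕ} {I : Fin s → Ideal R}
    (F : AdmissibleFiltration R s I) : Prop :=
  ∀ n : Fin s → ℤ, 0 ≤ n → ratliffRush F n = F.F n

section Helpers

open Polynomial

/-- `f` is given by a polynomial of degree at most `d` with `d`-th coefficient `a`. -/
def TopC (f : ℤ → ℝ) (d : ℕ) (a : ℝ) : Prop :=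
  ∃ p : ℝ[X], p.natDegree ≤ d ∧ p.coeff d = a ∧ ∀ k : ℤ, p.eval (k : ℝ) = f k

lemma TopC.mul {f g : ℤ → ℝ} {d e : ℕ} {a b : ℝ} (hf : TopC f d a) (hg : TopC g e b) :
    TopC (fun k => f k * g k) (d + e) (a * b) := by
  obtain ⟨p, hp, rfl, hp'⟩ := hf
  obtain ⟨q, hq, rfl, hq'⟩ := hg
  refine ⟨p * q, natDegree_mul_le_of_le hp hq, coeff_mul_add_eq_of_natDegree_le hp hq, ?_⟩
  intro k
  rw [eval_mul, hp', hq']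

lemma TopC.const (c : ℝ) : TopC (fun _ => c) 0 c :=
  ⟨C c, by simp, by simp, by simp⟩

lemma TopC.linear (v n : ℝ) : TopC (fun k => n + k * v) 1 v :=
  ⟨C v * X + C n, natDegree_linear_le, by simp, fun k => by simp; ring⟩

lemma TopC.lift {f : ℤ → ℝ} {d e : ℕ} {a : ℝ} (hf : TopC f d a) (h : d < e) : TopC f e 0 := by
  obtain ⟨p, hp, rfl, hp'⟩ := hf
  exact ⟨p, hp.trans h.le, coeff_eq_zero_of_natDegree_lt (hp.trans_lt h), hp'⟩

lemma TopC.sum {ι : Type*} (S : Finset ι) {f : ι → ℤ → ℝ} {d : ℕ} {a : ι → ℝ}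
    (h : ∀ i ∈ S, TopC (f i) d (a i)) : TopC (fun k => ∑ i ∈ S, f i k) d (∑ i ∈ S, a i) := by
  choose! p hp ha he using h
  refine ⟨∑ i ∈ S, p i, natDegree_sum_le_of_forall_le _ _ hp, ?_, ?_⟩
  · rw [finsetSum_coeff]; exact Finset.sum_congr rfl ha
  · intro k
    rw [eval_finsetSum]; exact Finset.sum_congr rfl fun i hi => he i hi k

lemma TopC.prod {ι : Type*} (S : Finset ι) {f : ι → ℤ → ℝ} {d : ι → ℕ} {a : ι → ℝ}
    (h : ∀ i, TopC (f i) (d i) (a i)) :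
    TopC (fun k => ∏ i ∈ S, f i k) (∑ i ∈ S, d i) (∏ i ∈ S, a i) := by
  classical
  induction S using Finset.induction_on with
  | empty => simpa using TopC.const 1
  | insert i S hi ih => simpa [Finset.prod_insert hi, Finset.sum_insert hi] using (h i).mul ih

lemma TopC.asc (v n : ℝ) (a : ℕ) :
    TopC (fun k => (ascPochhammer ℝ a).eval (n + k * v)) a (v ^ a) := by
  induction a with
  | zero => simpa using TopC.const 1
  | succ a ih =>
    have := ih.mul (TopC.linear v (n + a))
    rw [pow_succ]
    convert this using 1
    funext k
    rw [ascPochhammer_succ_right]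
    simp
    left; ring

lemma TopC.choose (v n : ℤ) (a : ℕ) :
    TopC (fun k => ((Ring.choose (n + k * v + (a : ℤ) - 1) a : ℤ) : ℝ)) a
      ((v : ℝ) ^ a / a.factorial) := by
  have h := (TopC.const ((a.factorial : ℝ)⁻¹)).mul (TopC.asc v n a)
  rw [zero_add] at h
  convert h using 1
  · funext k
    rw [← Ring.multichoose_eq]
    have h2 := Ring.factorial_nsmul_multichoose_eq_ascPochhammer (n + k * v) a
    rw [ascPochhammer_smeval_eq_eval, nsmul_eq_mul] at h2
    have h3 : ((a.factorial : ℝ)) * ((Ring.multichoose (n + k * v) a : ℤ) : ℝ)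
        = (ascPochhammer ℝ a).eval ((n : ℝ) + k * v) := by
      have := congrArg (Int.cast : ℤ → ℝ) h2
      push_cast at this
      rw [this, ← ascPochhammer_map (Int.castRingHom ℝ), eval_map, ← eq_intCast (Int.castRingHom ℝ),
        ← eval₂_at_apply]
      simp
    rw [← h3]
    have : (a.factorial : ℝ) ≠ 0 := by exact_mod_cast a.factorial_ne_zero
    field_simp
  · rw [div_eq_inv_mul]

lemma TopC.tendsto {f : ℤ → ℝ} {d : ℕ} {a : ℝ} (hf : TopC f d a) :
    Filter.Tendsto (fun k : ℕ => f k / (k : ℝ) ^ d) Filter.atTop (nhds a) := by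
  obtain ⟨p, hp, rfl, he⟩ := hf
  have h1 : ∀ i ∈ Finset.range (d + 1), Filter.Tendsto
      (fun k : ℕ => p.coeff i * (((k : ℝ)⁻¹) ^ (d - i))) Filter.atTop
      (nhds (p.coeff i * (0 : ℝ) ^ (d - i))) := fun i _ =>
    ((tendsto_inv_atTop_nhds_zero_nat (𝕜 := ℝ)).pow _).const_mul _
  have h2 := tendsto_finsetSum _ h1
  have h3 : ∑ i ∈ Finset.range (d + 1), p.coeff i * (0 : ℝ) ^ (d - i) = p.coeff d := by
    rw [Finset.sum_range_succ, Finset.sum_eq_zero]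
    · simp
    · intro i hi
      have := Finset.mem_range.mp hi
      rw [zero_pow (by omega), mul_zero]
  rw [h3] at h2
  refine h2.congr' ?_
  filter_upwards [Filter.eventually_gt_atTop 0] with k hk
  have hk' : (k : ℝ) ≠ 0 := by exact_mod_cast hk.ne'
  have he' := he k
  rw [Int.cast_natCast] at he'
  rw [← he', eval_eq_sum_range' (Nat.lt_succ_of_le hp), Finset.sum_div]
  refine Finset.sum_congr rfl fun i hi => ?_
  have := Finset.mem_range.mp hi
  obtain ⟨j, rfl⟩ : ∃ j, d = i + j := ⟨d - i, by omega⟩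
  rw [Nat.add_sub_cancel_left, pow_add, inv_pow]
  field_simp

lemma TopC.le {f g : ℤ → ℝ} {d : ℕ} {a b : ℝ} (hf : TopC f d a) (hg : TopC g d b)
    (h : ∃ N : ℕ, ∀ k : ℕ, N ≤ k → f k ≤ g k) : a ≤ b := by
  obtain ⟨N, h⟩ := h
  refine le_of_tendsto_of_tendsto hf.tendsto hg.tendsto ?_
  filter_upwards [Filter.eventually_ge_atTop N] with k hk
  exact div_le_div_of_nonneg_right (h k hk) (by positivity)

lemma TopC.delta {s : ℕ} (P : (Fin s → ℤ) → ℤ) (n : Fin s → ℤ) {d : ℕ} {a : ℝ}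
    (hf : TopC (fun k => (P (n + k • evec s) : ℝ)) d a) :
    ((deltaOp^[d] P n : ℤ) : ℝ) = a * d.factorial := by
  obtain ⟨p, hp, rfl, he⟩ := hf
  have h0 : deltaOp^[d] P n = (fwdDiff (evec s))^[d] P n := rfl
  have h1 : (fwdDiff (1 : ℝ))^[d] p.eval 0 = p.coeff d * d.factorial := by
    rcases hp.lt_or_eq with h | h
    · rw [Polynomial.fwdDiff_iter_eq_zero_of_degree_lt h, coeff_eq_zero_of_natDegree_lt h]; simp
    · subst h
      rw [Polynomial.fwdDiff_iter_degree_eq_factorial]; simp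
  rw [h0, ← h1, fwdDiff_iter_eq_sum_shift, fwdDiff_iter_eq_sum_shift]
  push_cast
  refine Finset.sum_congr rfl fun k _ => ?_
  have := he k
  rw [Int.cast_natCast] at this
  simp [this]

/-- The degree `d` form of `hilbPoly`. -/
noncomputable def topForm (s d : ℕ) (c : (Fin s → ℕ) → ℤ) (v : Fin s → ℤ) : ℝ :=
  ∑ α ∈ Finset.univ.filter (fun α : Fin s → Fin (d+1) => (∑ i, (α i : ℕ)) ≤ d),
    if (∑ i, (α i : ℕ)) = d then
      (c (fun i => (α i : ℕ)) : ℝ) * ∏ i, ((v i : ℝ) ^ (α i : ℕ) / (α i : ℕ).factorial) else 0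

lemma topC_hilbPoly (s d : ℕ) (c : (Fin s → ℕ) → ℤ) (n v : Fin s → ℤ) :
    TopC (fun k => (hilbPoly s d c (n + k • v) : ℝ)) d (topForm s d c v) := by
  unfold hilbPoly topForm
  push_cast
  refine TopC.sum _ fun α hα => ?_
  have hα' := (Finset.mem_filter.mp hα).2
  have h := (TopC.const ((-1) ^ (d - ∑ i, (α i : ℕ)) * (c (fun i => (α i : ℕ)) : ℝ))).mul
    (TopC.prod Finset.univ fun i => TopC.choose (v i) (n i) (α i : ℕ))
  rw [zero_add] at h
  simp only [Pi.add_apply, Pi.smul_apply, smul_eq_mul]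
  split_ifs with hs
  · rw [hs] at h ⊢
    simpa using h
  · exact h.lift (lt_of_le_of_ne hα' hs)

lemma topC_samuel (d : ℕ) (b : ℕ → ℤ) :
    TopC (fun k => (samuelPoly d b k : ℝ)) d ((b 0 : ℝ) / d.factorial) := by
  unfold samuelPoly
  push_cast
  have key : ((b 0 : ℝ) / d.factorial) =
      ∑ i ∈ Finset.range (d + 1), if i = 0 then (b 0 : ℝ) / d.factorial else 0 := by simp
  rw [key]
  refine TopC.sum _ fun i hi => ?_
  have hi' := Finset.mem_range.mp hi
  have h := (TopC.const ((-1) ^ i * (b i : ℝ))).mul (TopC.choose 1 0 (d - i))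
  rw [zero_add] at h
  have e : (fun k : ℤ => (-1 : ℝ) ^ i * (b i : ℝ) *
      ((Ring.choose (k + (d : ℤ) - 1 - (i : ℤ)) (d - i) : ℤ) : ℝ)) =
      (fun k : ℤ => (-1 : ℝ) ^ i * (b i : ℝ) *
      ((Ring.choose (0 + k * 1 + ((d - i : ℕ) : ℤ) - 1) (d - i) : ℤ) : ℝ)) := by
    funext k
    have e2 : (0 + k * 1 + ((d - i : ℕ) : ℤ) - 1) = k + (d : ℤ) - 1 - (i : ℤ) := by omega
    rw [e2]
  rw [e]
  split_ifs with hs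
  · subst hs
    simpa [div_eq_mul_inv] using h
  · exact h.lift (by omega)

lemma lenI_eq (R M : Type*) [CommRing R] [AddCommGroup M] [Module R M] :
    lenI R M = ((Module.length R M).toNat : ℤ) := by
  unfold lenI
  rw [← Module.coe_length, WithBot.unbotD_coe]

lemma lenI_le {R : Type*} [CommRing R] {A B : Ideal R} (h : B ≤ A)
    (hB : Module.length R (R ⧸ B) ≠ ⊤) : lenI R (R ⧸ A) ≤ lenI R (R ⧸ B) := by
  rw [lenI_eq, lenI_eq]
  have := Module.length_le_of_surjective (Submodule.factor h) (Submodule.factor_surjective h)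
  exact_mod_cast ENat.toNat_le_toNat this hB

lemma length_ne_top_of_le {R : Type*} [CommRing R] {A B : Ideal R} (h : B ≤ A)
    (hB : Module.length R (R ⧸ B) ≠ ⊤) : Module.length R (R ⧸ A) ≠ ⊤ :=
  ne_top_of_le_ne_top hB
    (Module.length_le_of_surjective (Submodule.factor h) (Submodule.factor_surjective h))

lemma length_prodPow_ne_top {R : Type*} [CommRing R] [IsLocalRing R] [IsNoetherianRing R]
    {s : ℕ} {I : Fin s → Ideal R} (hI : ∀ i, IsMPrimary R (I i)) (n : Fin s → ℤ) :
    Module.length R (R ⧸ prodPow I n) ≠ ⊤ := by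
  have hrad : maximalIdeal R ≤ (prodPow I n).radical := by
    intro x hx
    have : ∀ i, ∃ t, x ^ t ∈ I i := fun i => (hI i).2 hx
    choose t ht using this
    refine ⟨∑ i, t i * (n i).toNat, ?_⟩
    rw [← Finset.prod_pow_eq_pow_sum]
    refine Ideal.prod_mem_prod fun i _ => ?_
    rw [pow_mul]
    exact Ideal.pow_mem_pow (ht i) _
  have : Ring.KrullDimLE 0 (R ⧸ prodPow I n) := Ring.krullDimLE_zero_iff.mpr fun J prime => by
    refine Ideal.isMaximal_of_isIntegral_of_isMaximal_comap (R := R) J ?_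
    have hp := prime.comap (algebraMap R (R ⧸ prodPow I n))
    have h1 : prodPow I n ≤ J.comap (algebraMap R (R ⧸ prodPow I n)) := by
      intro x hx
      rw [Ideal.mem_comap, Ideal.Quotient.algebraMap_eq, Ideal.Quotient.eq_zero_iff_mem.2 hx]
      exact J.zero_mem
    have h2 := hrad.trans (hp.radical_le_iff.2 h1)
    rw [← (maximalIdeal.isMaximal R).eq_of_le hp.ne_top h2]
    exact maximalIdeal.isMaximal R
  have : IsArtinianRing (R ⧸ prodPow I n) := IsNoetherianRing.isArtinianRing_of_krullDimLE_zero
  have : IsArtinian R (R ⧸ prodPow I n) :=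
    isArtinian_of_surjective_algebraMap (Ideal.Quotient.mk_surjective (I := prodPow I n))
  exact Module.length_ne_top

lemma prodPow_smul_evec {R : Type*} [CommRing R] {s : ℕ} (I : Fin s → Ideal R) (k : ℕ) :
    prodPow I ((k : ℤ) • evec s) = (∏ i, I i) ^ k := by
  simp [prodPow, evec, Finset.prod_pow]

lemma coeff_eq_of_topForm (s d : ℕ) (c c' : (Fin s → ℕ) → ℤ)
    (h : ∀ v : Fin s → ℤ, (∀ i, 1 ≤ v i) → topForm s d c v = topForm s d c' v)
    (α : Fin s → ℕ) (hα : ∑ i, α i = d) : c α = c' α := by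
  classical
  let T := Finset.univ.filter (fun α : Fin s → Fin (d+1) => (∑ i, (α i : ℕ)) ≤ d)
  let ex : (Fin s → Fin (d+1)) → (Fin s →₀ ℕ) :=
    fun α => Finsupp.equivFunOnFinite.symm (fun i => (α i : ℕ))
  let Q : ((Fin s → ℕ) → ℤ) → MvPolynomial (Fin s) ℝ := fun c =>
    ∑ α ∈ T, MvPolynomial.monomial (ex α) (if (∑ i, (α i : ℕ)) = d then
      (c (fun i => (α i : ℕ)) : ℝ) * ∏ i, ((α i : ℕ).factorial : ℝ)⁻¹ else 0)
  have hQ : ∀ c (v : Fin s → ℤ), MvPolynomial.eval (fun i => (v i : ℝ)) (Q c) = topForm s d c v := by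
    intro c v
    simp only [Q, topForm, map_sum]
    refine Finset.sum_congr rfl fun α _ => ?_
    rw [MvPolynomial.eval_monomial, Finsupp.prod_fintype _ _ (by simp)]
    split_ifs
    · simp only [div_eq_mul_inv, Finset.prod_mul_distrib, ex, Finsupp.equivFunOnFinite_symm_apply_apply]
      ring
    · simp
  have hQQ : Q c = Q c' := by
    refine MvPolynomial.funext_set (fun _ => ((↑) : ℤ → ℝ) '' Set.Ici 1) ?_ ?_
    · intro _
      exact (Set.Ici_infinite 1).image Int.cast_injective.injOn
    · intro x hx
      have : ∀ i, ∃ v : ℤ, 1 ≤ v ∧ (v : ℝ) = x i := fun i => hx i trivial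
      choose v hv hvx using this
      obtain rfl : (fun i => (v i : ℝ)) = x := funext hvx
      rw [hQ, hQ, h v hv]
  have hle : ∀ i, α i < d + 1 := fun i => by
    have := Finset.single_le_sum (f := α) (fun _ _ => Nat.zero_le _) (Finset.mem_univ i)
    omega
  let α' : Fin s → Fin (d+1) := fun i => ⟨α i, hle i⟩
  have hco : ∀ c, (Q c).coeff (ex α') = (c α : ℝ) * ∏ i, ((α i).factorial : ℝ)⁻¹ := by
    intro c
    simp only [Q, MvPolynomial.coeff_sum, MvPolynomial.coeff_monomial]
    rw [Finset.sum_eq_single α']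
    · simp [α', hα]
    · intro β _ hβ
      rw [if_neg]
      intro he
      apply hβ
      funext i
      have := DFunLike.congr_fun he i
      exact Fin.ext (by simpa [ex] using this)
    · intro hn
      exact absurd (Finset.mem_filter.2 ⟨Finset.mem_univ _, by simp [α', hα]⟩) hn
  have := congrArg (MvPolynomial.coeff (ex α')) hQQ
  rw [hco, hco] at this
  have hne : ∏ i, ((α i).factorial : ℝ)⁻¹ ≠ 0 :=
    Finset.prod_ne_zero_iff.2 fun i _ => inv_ne_zero (by exact_mod_cast (α i).factorial_ne_zero)
  exact_mod_cast mul_right_cancel₀ hne this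

end Helpers

/-- Let `(R,m)` be a Noetherian local ring of dimension `d ≥ 1`, `I₁,…,I_s`
`m`-primary ideals, and `F` an `I`-admissible filtration.  Let `c` be the Hilbert
coefficients of `F`, `c'` those of the filtration `{Iⁿ}`, and `b` the Hilbert coefficients
of the single ideal `I₁⋯I_s`.  Then:
(1) `e_α(F) = e_α({Iⁿ})` for all `α` with `|α| = d`;
(2) `Δ^d P_F(n) = Δ^d P_{{Iⁿ}}(n) = e₀(I₁⋯I_s)` for all `n`;
(3) if `J ⊆ F(e)` satisfies `J F(n) = F(n+e)` for all large `n` (such a `J` is `m`-primary,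
with Hilbert coefficients `bJ`), then `Δ^d P_F(n) = e₀(J) = e₀(I₁⋯I_s)`. -/
theorem hilbert_coeff_top_degree_and_delta
    (R : Type*) [CommRing R] [IsLocalRing R] [IsNoetherianRing R]
    (d s : ℕ) (hd : 1 ≤ d) (hdim : ringKrullDim R = d)
    (I : Fin s → Ideal R) (hI : ∀ i, IsMPrimary R (I i))
    (F : AdmissibleFiltration R s I)
    (c : (Fin s → ℕ) → ℤ) (hc : IsHilbCoeffs F d c)
    (c' : (Fin s → ℕ) → ℤ)
    (hc' : ∃ N : ℕ, ∀ n : Fin s → ℤ, (∀ i, (N : ℤ) ≤ n i) →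
      hilbPoly s d c' n = lenI R (R ⧸ prodPow I n))
    (b : ℕ → ℤ) (hb : IsSamuelCoeffs (∏ i, I i) d b) :
    (∀ α : Fin s → ℕ, (∑ i, α i) = d → c α = c' α)
    ∧ (∀ n : Fin s → ℤ,
        deltaOp^[d] (hilbPoly s d c) n = deltaOp^[d] (hilbPoly s d c') n ∧
        deltaOp^[d] (hilbPoly s d c) n = b 0)
    ∧ (∀ J : Ideal R, J ≤ F.F (evec s) →
        (∃ N : ℕ, ∀ n : Fin s → ℤ, (∀ i, (N : ℤ) ≤ n i) → J * F.F n = F.F (n + evec s)) →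
        ∀ bJ : ℕ → ℤ, IsSamuelCoeffs J d bJ →
          (∀ n : Fin s → ℤ, deltaOp^[d] (hilbPoly s d c) n = bJ 0) ∧ bJ 0 = b 0) := by
  obtain ⟨m, hm0, hm⟩ := F.admissible
  obtain ⟨N, hN⟩ := hc
  obtain ⟨N', hN'⟩ := hc'
  obtain ⟨B, hB⟩ := hb
  have hfin := length_prodPow_ne_top hI
  have hfinF : ∀ n, Module.length R (R ⧸ F.F n) ≠ ⊤ := fun n =>
    length_ne_top_of_le (F.prodPow_le n) (hfin n)
  have hFI : ∀ n : Fin s → ℤ, 0 ≤ n → F.F (n + m) ≤ prodPow I n := fun n hn => by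
    rw [hm n hn]; exact Ideal.mul_le_left
  have hform : ∀ v : Fin s → ℤ, (∀ i, 1 ≤ v i) → topForm s d c v = topForm s d c' v := by
    intro v hv
    have hkv : ∀ (k : ℕ) (i : Fin s), (k : ℤ) ≤ (k : ℤ) * v i := fun k i =>
      le_mul_of_one_le_right (by positivity) (hv i)
    apply le_antisymm
    · refine TopC.le (topC_hilbPoly s d c 0 v) (topC_hilbPoly s d c' 0 v)
        ⟨max N N', fun k hk => ?_⟩
      have hkN : N ≤ k := le_trans (le_max_left _ _) hk
      have hkN' : N' ≤ k := le_trans (le_max_right _ _) hk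
      rw [hN, hN']
      · exact_mod_cast lenI_le (F.prodPow_le _) (hfin _)
      · intro i
        have := hkv k i
        simp only [Pi.add_apply, Pi.zero_apply, Pi.smul_apply, smul_eq_mul]
        omega
      · intro i
        have := hkv k i
        simp only [Pi.add_apply, Pi.zero_apply, Pi.smul_apply, smul_eq_mul]
        omega
    · refine TopC.le (topC_hilbPoly s d c' 0 v) (topC_hilbPoly s d c m v)
        ⟨max N N', fun k hk => ?_⟩
      have hkN : N ≤ k := le_trans (le_max_left _ _) hk
      have hkN' : N' ≤ k := le_trans (le_max_right _ _) hk
      rw [hN, hN', zero_add, add_comm m]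
      · have := hFI ((k : ℤ) • v) (fun i => by
          have := hkv k i
          simp only [Pi.zero_apply, Pi.smul_apply, smul_eq_mul]
          omega)
        exact_mod_cast lenI_le this (hfinF _)
      · intro i
        have := hkv k i
        simp only [Pi.add_apply, Pi.zero_apply, Pi.smul_apply, smul_eq_mul]
        omega
      · intro i
        have := hkv k i
        have h0 : 0 ≤ m i := hm0 i
        simp only [Pi.add_apply, Pi.smul_apply, smul_eq_mul]
        omega
  have hev : topForm s d c (evec s) = topForm s d c' (evec s) := hform _ fun _ => le_rfl
  have hfac : (d.factorial : ℝ) ≠ 0 := by exact_mod_cast d.factorial_ne_zero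
  have hbe : topForm s d c' (evec s) = (b 0 : ℝ) / d.factorial := by
    have heq : ∀ k : ℕ, max N' B ≤ k →
        hilbPoly s d c' (0 + (k : ℤ) • evec s) = samuelPoly d b k := by
      intro k hk
      have hkN' : N' ≤ k := le_trans (le_max_left _ _) hk
      rw [hB k (le_trans (le_max_right _ _) hk), hN', zero_add, prodPow_smul_evec]
      intro i
      simp [evec, hkN']
    apply le_antisymm
    · exact TopC.le (topC_hilbPoly s d c' 0 _) (topC_samuel d b)
        ⟨_, fun k hk => by rw [heq k hk]⟩
    · exact TopC.le (topC_samuel d b) (topC_hilbPoly s d c' 0 _)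
        ⟨_, fun k hk => by rw [heq k hk]⟩
  have hdel : ∀ n, deltaOp^[d] (hilbPoly s d c) n = b 0 := by
    intro n
    have := TopC.delta _ n (topC_hilbPoly s d c n (evec s))
    rw [hev, hbe, div_mul_cancel₀ _ hfac] at this
    exact_mod_cast this
  have hdel' : ∀ n, deltaOp^[d] (hilbPoly s d c') n = b 0 := by
    intro n
    have := TopC.delta _ n (topC_hilbPoly s d c' n (evec s))
    rw [hbe, div_mul_cancel₀ _ hfac] at this
    exact_mod_cast this
  refine ⟨coeff_eq_of_topForm s d c c' hform, fun n => ⟨by rw [hdel, hdel'], hdel n⟩, ?_⟩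
  intro J hJ ⟨K, hK⟩ bJ ⟨BJ, hBJ⟩
  have hJF : ∀ k : ℕ, J ^ k ≤ F.F (0 + (k : ℤ) • evec s) := by
    intro k
    induction k with
    | zero =>
      have := F.prodPow_le (0 + ((0 : ℕ) : ℤ) • evec s)
      rw [zero_add, prodPow_smul_evec, pow_zero] at this
      rw [zero_add, pow_zero]
      exact this
    | succ k ih =>
      rw [pow_succ]
      refine (Ideal.mul_mono ih hJ).trans ((F.mul_le _ _).trans (le_of_eq ?_))
      congr 1
  have hFJ : ∀ k : ℕ, F.F ((K : ℤ) • evec s + (k : ℤ) • evec s) =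
      J ^ k * F.F ((K : ℤ) • evec s) := by
    intro k
    induction k with
    | zero => simp
    | succ k ih =>
      rw [pow_succ', mul_assoc, ← ih, hK]
      · congr 1
      · intro i
        simp [evec]
  have hFJle : ∀ k : ℕ, F.F ((K : ℤ) • evec s + (k : ℤ) • evec s) ≤ J ^ k := fun k => by
    rw [hFJ]; exact Ideal.mul_le_left
  have hJfin : ∀ k : ℕ, Module.length R (R ⧸ J ^ k) ≠ ⊤ := fun k =>
    length_ne_top_of_le (hFJle k) (hfinF _)
  have hbJ : (bJ 0 : ℝ) / d.factorial = topForm s d c (evec s) := by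
    apply le_antisymm
    · refine TopC.le (topC_samuel d bJ) (topC_hilbPoly s d c ((K : ℤ) • evec s) _)
        ⟨max N BJ, fun k hk => ?_⟩
      have hkN : N ≤ k := le_trans (le_max_left _ _) hk
      rw [hBJ k (le_trans (le_max_right _ _) hk), hN]
      · exact_mod_cast lenI_le (hFJle k) (hfinF _)
      · intro i
        simp [evec]
        omega
    · refine TopC.le (topC_hilbPoly s d c 0 _) (topC_samuel d bJ)
        ⟨max N BJ, fun k hk => ?_⟩
      have hkN : N ≤ k := le_trans (le_max_left _ _) hk
      rw [hBJ k (le_trans (le_max_right _ _) hk), hN]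
      · exact_mod_cast lenI_le (hJF k) (hJfin k)
      · intro i
        simp [evec, hkN]
  have hfinal : bJ 0 = b 0 := by
    rw [hev, hbe, div_left_inj' hfac] at hbJ
    exact_mod_cast hbJ
  exact ⟨fun n => by rw [hdel, hfinal], hfinal⟩
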